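/- Let q = p^m ≡ 5 (mod 8) be a prime power with primitive element α of F_q, and let q = s² + t² be the Katre–Rajwade-normalized representation. Then E = C_0^4 ∪ C_1^4 satisfies Δ(E) = ((q−3+t)/4)·C_1^2 + ((q−3−t)/4)·C_0^2 as multisets; in particular, E is a skew PDS corresponding to the Paley (q,(q−1)/2,(q−5)/4,(q−1)/4)-PDS C_1^2 if t = −2, and corresponding to the Paley (q,(q−1)/2,(q−5)/4,(q−1)/4)-PDS C_0^2 if t = 2. -/

import Mathlib

open Finset

section Defs

variable {G : Type*} [AddCommGroup G] [Fintype G] [DecidableEq G]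

/-- The multiset `Δ(D)` of internal differences `x - y` (for `x ≠ y` in `D`). -/
def intDiff (D : Finset G) : Multiset G :=
  ((D ×ˢ D).filter (fun p => p.1 ≠ p.2)).val.map (fun p => p.1 - p.2)

/-- The multiset `Δ(D, E)` of external differences `x - y` for `x ∈ D`, `y ∈ E`. -/
def extDiff (D E : Finset G) : Multiset G :=
  (D ×ˢ E).val.map (fun p => p.1 - p.2)

/-- The finset `G^*` of nonzero elements of `G`. -/
def Gstar (G : Type*) [AddCommGroup G] [Fintype G] [DecidableEq G] : Finset G :=
  Finset.univ.erase 0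

/-- `A` is a `(v, k, lam, mu)` partial difference set in `G`:
`Δ(A) = lam • A^* + mu • (G^* \ A)`. -/
def IsPDS (A : Finset G) (v k lam mu : ℕ) : Prop :=
  Fintype.card G = v ∧ A.card = k ∧
    intDiff A = lam • (A.erase 0).val + mu • (Gstar G \ A).val

/-- `D` is a `(v, k, lam, mu)` skew partial difference set corresponding to the
`(v, k, lam, mu)`-PDS `A`: `Δ(D) = lam • A^* + mu • (G^* \ A)`. -/
def IsSkewPDS (D A : Finset G) (v k lam mu : ℕ) : Prop :=
  IsPDS A v k lam mu ∧ D.card = k ∧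
    intDiff D = lam • (A.erase 0).val + mu • (Gstar G \ A).val

/-- `D` is an `(n, m, k₁, …, k_m; lam, mu)` disjoint partial difference family relative
to `T`: the `D i` are pairwise disjoint subsets of `G^*` of sizes `k i`, and
`∑ i, Δ(D i) = lam • T + mu • (G^* \ T)`. -/
def IsDPDF {ι : Type*} [Fintype ι] (D : ι → Finset G) (n m : ℕ) (k : ι → ℕ)
    (T : Finset G) (lam mu : ℕ) : Prop :=
  Fintype.card G = n ∧ Fintype.card ι = m ∧
    (∀ i, (0 : G) ∉ D i) ∧ (∀ i, (D i).card = k i) ∧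
    (Pairwise (fun i j => Disjoint (D i) (D j))) ∧
    ∑ i, intDiff (D i) = lam • T.val + mu • (Gstar G \ T).val

/-- `D` is an `(n, m, k₁, …, k_m; lam, mu)` external partial difference family relative
to `T`: the `D i` are pairwise disjoint subsets of `G^*` of sizes `k i`, and
`∑_{i ≠ j}, Δ(D i, D j) = lam • T + mu • (G^* \ T)`. -/
def IsEPDF {ι : Type*} [Fintype ι] [DecidableEq ι] (D : ι → Finset G) (n m : ℕ)
    (k : ι → ℕ) (T : Finset G) (lam mu : ℕ) : Prop :=
  Fintype.card G = n ∧ Fintype.card ι = m ∧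
    (∀ i, (0 : G) ∉ D i) ∧ (∀ i, (D i).card = k i) ∧
    (Pairwise (fun i j => Disjoint (D i) (D j))) ∧
    ∑ i, ∑ j ∈ Finset.univ.erase i, extDiff (D i) (D j)
      = lam • T.val + mu • (Gstar G \ T).val

/-- `D` is an `(n, m, k₁, …, k_m, lam)` disjoint difference family:
`∑ i, Δ(D i) = lam • G^*`. -/
def IsDDF {ι : Type*} [Fintype ι] (D : ι → Finset G) (n m : ℕ) (k : ι → ℕ)
    (lam : ℕ) : Prop :=
  Fintype.card G = n ∧ Fintype.card ι = m ∧
    (∀ i, (0 : G) ∉ D i) ∧ (∀ i, (D i).card = k i) ∧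
    (Pairwise (fun i j => Disjoint (D i) (D j))) ∧
    ∑ i, intDiff (D i) = lam • (Gstar G).val

/-- `D` is an `(n, m, k₁, …, k_m, lam)` external difference family:
`∑_{i ≠ j}, Δ(D i, D j) = lam • G^*`. -/
def IsEDF {ι : Type*} [Fintype ι] [DecidableEq ι] (D : ι → Finset G) (n m : ℕ)
    (k : ι → ℕ) (lam : ℕ) : Prop :=
  Fintype.card G = n ∧ Fintype.card ι = m ∧
    (∀ i, (0 : G) ∉ D i) ∧ (∀ i, (D i).card = k i) ∧
    (Pairwise (fun i j => Disjoint (D i) (D j))) ∧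
    ∑ i, ∑ j ∈ Finset.univ.erase i, extDiff (D i) (D j) = lam • (Gstar G).val

end Defs

section Cyclotomy

variable {F : Type*} [Field F] [Fintype F] [DecidableEq F]

/-- The cyclotomic class `C_i^e = α^i ⟨α^e⟩` of order `e` in the finite field `F`,
with respect to the primitive element `α`.  (Since `α` has multiplicative order at most
`|F| - 1`, letting `j` range over `0, …, |F| - 1` captures the whole class.) -/
def cycClass (α : F) (e i : ℕ) : Finset F :=
  (Finset.range (Fintype.card F)).image (fun j => α ^ (e * j + i))

/-- `α` is a primitive element of the finite field `F`: every nonzero element of `F`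
is a power of `α`. -/
def IsPrimitiveElt (α : F) : Prop :=
  ∀ x : F, x ≠ 0 → ∃ n : ℕ, α ^ n = x

end Cyclotomy

/-!
Let `χ` be the quartic character of `F` with `χ α = i` and let `ρ = χ ^ 2` be the quadratic
character. The function `w x = re (χ x) + im (χ x)` is `1` on `E = C_0^4 ∪ C_1^4` and `-1` on the
other two quartic classes, so the multiplicity of `d` in `Δ(E)` is determined by the
autocorrelation `∑ x, w x * w (x + d)`. Substituting `x = -d y` expresses the latter through the
Jacobi sum `J = J(χ, χ)`; as `χ (-1) = -1`, it equals `-1 - im J * ρ d`.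

It remains to see that `im J = t`. The norm of `J` is `q`. The relation `χ 4 * J = J(ρ, χ)` and a
congruence modulo `2 (1 + i)` give `re J ≡ 3` modulo `4`. With `k = (q - 1) / 4`, the ring
homomorphism `φ : ℤ[i] → F` sending `i` to `α ^ k` turns `χ` into `x ↦ x ^ k`, and evaluating power
sums gives `φ J = 0` and `φ (conj J) = ± (3k choose k)`. By Lucas' theorem this binomial coefficient
is prime to `p`, so `p ∤ re J`; together with the normalization of `s + t i` this forces
`J = -s + t i`, where `φ J = 0` decides the sign of the imaginary part.
-/

section Differences

variable {G : Type*} [AddCommGroup G]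

lemma count_zero_intDiff [DecidableEq G] (D : Finset G) : (intDiff D).count 0 = 0 := by
  simp [intDiff, sub_eq_zero]

variable [Fintype G]

lemma count_intDiff [DecidableEq G] {d : G} (hd : d ≠ 0) (D : Finset G) :
    (intDiff D).count d = #{x | x ∈ D ∧ x + d ∈ D} := by
  rw [intDiff, Multiset.count_map, ← Finset.filter_val, Finset.card_val]
  refine Finset.card_bij' (fun z _ => z.2) (fun x _ => (x + d, x)) ?_ ?_ ?_ ?_
  · rintro ⟨x, y⟩ hxy
    simp only [mem_filter, mem_product] at hxy
    obtain ⟨⟨⟨hx, hy⟩, -⟩, rfl⟩ := hxy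
    simpa using ⟨hy, hx⟩
  · simp +contextual [hd]
  · rintro ⟨x, y⟩ hxy
    simp [(mem_filter.mp hxy).2]
  · simp

/-- A balanced sign function on a finite abelian group: it vanishes at `0`, takes the values `±1`
elsewhere, and takes each of them equally often. -/
structure IsBalancedSign (w : G → ℤ) : Prop where
  map_zero : w 0 = 0
  eq_one_or_eq_neg_one : ∀ x, x ≠ 0 → w x = 1 ∨ w x = -1
  sum_eq_zero : ∑ x, w x = 0

/-- The set on which a sign function takes the value `1`. For balanced sign functions the number
of representations of a difference by this set is governed by the autocorrelation of `w`. -/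
def positiveSet {X : Type*} [Fintype X] (w : X → ℤ) : Finset X := {x | w x = 1}

@[simp]
lemma mem_positiveSet {X : Type*} [Fintype X] {w : X → ℤ} {x : X} :
    x ∈ positiveSet w ↔ w x = 1 := by
  simp [positiveSet]

namespace IsBalancedSign

variable {w : G → ℤ}

lemma neg (hw : IsBalancedSign w) : IsBalancedSign (-w) where
  map_zero := by simp [hw.map_zero]
  eq_one_or_eq_neg_one x hx := by
    rcases hw.eq_one_or_eq_neg_one x hx with h | h <;> simp [h]
  sum_eq_zero := by simp [hw.sum_eq_zero]

lemma zero_notMem_positiveSet (hw : IsBalancedSign w) : 0 ∉ positiveSet w := by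
  simp [hw.map_zero]

lemma two_mul_indicator [DecidableEq G] (hw : IsBalancedSign w) (x : G) :
    2 * (if w x = 1 then (1 : ℤ) else 0) = 1 + w x - if x = 0 then 1 else 0 := by
  obtain rfl | hx := eq_or_ne x 0
  · simp [hw.map_zero]
  · rcases hw.eq_one_or_eq_neg_one x hx with h | h <;> simp [hx, h]

lemma two_mul_card_positiveSet (hw : IsBalancedSign w) :
    2 * (#(positiveSet w) : ℤ) = Fintype.card G - 1 := by
  classical
  rw [positiveSet, card_filter]
  push_cast
  simp only [mul_sum, hw.two_mul_indicator, sum_sub_distrib, sum_add_distrib, hw.sum_eq_zero]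
  simp

variable [DecidableEq G]

lemma Gstar_sdiff_positiveSet (hw : IsBalancedSign w) :
    Gstar G \ positiveSet w = positiveSet (-w) := by
  ext x
  obtain rfl | hx := eq_or_ne x 0
  · simp [Gstar, hw.map_zero]
  · rcases hw.eq_one_or_eq_neg_one x hx with h | h <;> simp [Gstar, hx, h]

lemma four_mul_count_intDiff (hw : IsBalancedSign w) {d : G} (hd : d ≠ 0) :
    4 * ((intDiff (positiveSet w)).count d : ℤ) =
      Fintype.card G - 2 - w d - w (-d) + ∑ x, w x * w (x + d) := by
  have expand (x : G) : 4 * (if w x = 1 ∧ w (x + d) = 1 then (1 : ℤ) else 0) =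
      1 + w x + w (x + d) + w x * w (x + d) - (if x = 0 then 1 + w d else 0) -
        (if x = -d then 1 + w (-d) else 0) := by
    have hx : x + d = 0 ↔ x = -d := add_eq_zero_iff_eq_neg
    calc
      _ = 2 * (if w x = 1 then (1 : ℤ) else 0) * (2 * if w (x + d) = 1 then 1 else 0) := by
        split_ifs <;> simp_all
      _ = (1 + w x - if x = 0 then 1 else 0) * (1 + w (x + d) - if x = -d then 1 else 0) := by
        simp only [hw.two_mul_indicator, hx]
      _ = _ := by
        obtain rfl | h0 := eq_or_ne x 0
        · simp [hw.map_zero, hx.not.mp (by simpa using hd)]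
        obtain rfl | h1 := eq_or_ne x (-d)
        · simp [hw.map_zero, hd]
        · simp only [h0, h1, if_false]
          ring
  have sum_shift : ∑ x, w (x + d) = 0 := by
    rw [← hw.sum_eq_zero]
    exact Equiv.sum_comp (Equiv.addRight d) w
  rw [count_intDiff hd, card_filter]
  push_cast
  simp only [mem_positiveSet, mul_sum, expand, sum_sub_distrib, sum_add_distrib, hw.sum_eq_zero,
    sum_shift, sum_const, card_univ, nsmul_one, sum_ite_eq', mem_univ, if_true]
  ring

lemma intDiff_eq (hw : IsBalancedSign w) {D : Finset G} {a b : ℕ} {c : ℤ}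
    (hD : ∀ d ≠ 0, 4 * ((intDiff D).count d : ℤ) = Fintype.card G - 3 - c * w d)
    (ha : 4 * (a : ℤ) = Fintype.card G - 3 - c) (hb : 4 * (b : ℤ) = Fintype.card G - 3 + c) :
    intDiff D = a • (positiveSet w).val + b • (positiveSet (-w)).val := by
  ext d
  simp only [Multiset.count_add, Multiset.count_nsmul,
    Multiset.count_eq_of_nodup (Finset.nodup _), Finset.mem_val, mem_positiveSet]
  obtain rfl | hd := eq_or_ne d 0
  · simp [count_zero_intDiff, hw.map_zero]
  · have count_d := hD d hd
    rcases hw.eq_one_or_eq_neg_one d hd with h | h <;> rw [h] at count_d <;> simp [h] <;> lia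

lemma isSkewPDS (hw : IsBalancedSign w) (even : ∀ d, w (-d) = w d)
    (autocorrelation : ∀ d ≠ 0, ∑ x, w x * w (x + d) = -1) (hG : Fintype.card G % 4 = 1)
    {D : Finset G} (card_D : 2 * (#D : ℤ) = Fintype.card G - 1)
    (count_D : ∀ d ≠ 0, 4 * ((intDiff D).count d : ℤ) = Fintype.card G - 3 - 2 * w d)
    (hG5 : 5 ≤ Fintype.card G) :
    IsSkewPDS D (positiveSet w) (Fintype.card G) ((Fintype.card G - 1) / 2)
      ((Fintype.card G - 5) / 4) ((Fintype.card G - 1) / 4) := by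
  have card_w := hw.two_mul_card_positiveSet
  have count_w (d : G) (hd : d ≠ 0) :
      4 * ((intDiff (positiveSet w)).count d : ℤ) = Fintype.card G - 3 - 2 * w d := by
    rw [hw.four_mul_count_intDiff hd, even, autocorrelation d hd]
    ring
  rw [IsSkewPDS, IsPDS, erase_eq_of_notMem hw.zero_notMem_positiveSet,
    hw.Gstar_sdiff_positiveSet]
  exact ⟨⟨rfl, by lia, hw.intDiff_eq count_w (by lia) (by lia)⟩, by lia,
    hw.intDiff_eq count_D (by lia) (by lia)⟩

end IsBalancedSign

end Differences

section PrimitiveElements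

variable {F : Type*} [Field F] {α : F}

namespace IsPrimitiveElt

lemma mem_zpowers (hα : IsPrimitiveElt α) (h0 : α ≠ 0) (x : Fˣ) :
    x ∈ Subgroup.zpowers (Units.mk0 α h0) := by
  obtain ⟨n, hn⟩ := hα x x.ne_zero
  exact ⟨n, Units.ext (by simpa using hn)⟩

variable [Fintype F]

lemma ne_zero (hα : IsPrimitiveElt α) (hF : 2 < Fintype.card F) : α ≠ 0 := by
  classical
  rintro rfl
  have only_two : (univ : Finset F) ⊆ {0, 1} := by
    intro x _
    by_contra hx
    simp only [mem_insert, mem_singleton, not_or] at hx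
    obtain ⟨n, hn⟩ := hα x hx.1
    rcases n with _ | n <;> simp_all
  have := (card_le_card only_two).trans card_le_two
  rw [card_univ] at this
  lia

lemma isPrimitiveRoot (hα : IsPrimitiveElt α) (h0 : α ≠ 0) :
    IsPrimitiveRoot α (Fintype.card F - 1) := by
  have order_eq := orderOf_eq_card_of_forall_mem_zpowers (hα.mem_zpowers h0)
  rw [← orderOf_units, Units.val_mk0, Nat.card_units, Nat.card_eq_fintype_card] at order_eq
  exact order_eq ▸ IsPrimitiveRoot.orderOf α

lemma exists_mulChar_apply_eq {R : Type*} [CommRing R] (hα : IsPrimitiveElt α) (h0 : α ≠ 0)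
    {n : ℕ} {ζ : R} (hζ : ζ ^ n = 1) (hn : n ∣ Fintype.card F - 1) :
    ∃ χ : MulChar F R, χ α = ζ := by
  classical
  obtain ⟨c, hc⟩ := hn
  have hζF : ζ ^ Fintype.card Fˣ = 1 := by rw [Fintype.card_units, hc, pow_mul, hζ, one_pow]
  let z : Rˣ := Units.ofPowEqOne ζ _ hζF Fintype.card_ne_zero
  have hz : z ∈ rootsOfUnity (Fintype.card Fˣ) R := Units.ext (by simp [z])
  exact ⟨.ofRootOfUnity hz (hα.mem_zpowers h0), by
    simpa [z] using MulChar.ofRootOfUnity_spec hz (hα.mem_zpowers h0)⟩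

lemma quadraticChar_eq_neg_one [DecidableEq F] (hα : IsPrimitiveElt α) (hF : ringChar F ≠ 2) :
    quadraticChar F α = -1 := by
  obtain ⟨x, hx⟩ := quadraticChar_exists_neg_one hF
  have hx0 : x ≠ 0 := by
    rintro rfl
    simp at hx
  obtain ⟨n, rfl⟩ := hα x hx0
  rw [map_pow] at hx
  have hα0 : α ≠ 0 := by
    rintro rfl
    rcases n with _ | n <;> simp at hx
  refine (quadraticChar_dichotomy hα0).resolve_left fun h => ?_
  rw [h, one_pow] at hx
  lia

lemma pow_eq_neg_one (hα : IsPrimitiveElt α) (h0 : α ≠ 0) {n : ℕ}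
    (hF : Fintype.card F = 2 * n + 1) : α ^ n = -1 := by
  have card_sub_one : Fintype.card F - 1 = n * 2 := by lia
  exact ((hα.isPrimitiveRoot h0).pow (by have := Fintype.one_lt_card (α := F); lia)
    card_sub_one).eq_neg_one_of_two_right

end IsPrimitiveElt

variable [Fintype F] [DecidableEq F]

lemma zero_notMem_cycClass (h0 : α ≠ 0) (e i : ℕ) : 0 ∉ cycClass α e i := by
  simp [cycClass, h0]

lemma IsPrimitiveElt.pow_mem_cycClass_iff (hα : IsPrimitiveElt α) (h0 : α ≠ 0) {e : ℕ}
    (he : e ∣ Fintype.card F - 1) (n i : ℕ) :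
    α ^ n ∈ cycClass α e i ↔ n ≡ i [MOD e] := by
  have prim := hα.isPrimitiveRoot h0
  have card_pos : 0 < Fintype.card F - 1 := by have := Fintype.one_lt_card (α := F); lia
  have pow_inj (a b : ℕ) : α ^ a = α ^ b ↔ a ≡ b [MOD Fintype.card F - 1] := by
    rw [(isOfFinOrder_iff_pow_eq_one.mpr ⟨_, card_pos, prim.pow_eq_one⟩).pow_eq_pow_iff_modEq,
      ← prim.eq_orderOf]
  simp only [cycClass, mem_image, mem_range, pow_inj]
  constructor
  · rintro ⟨j, -, hj⟩
    exact (hj.of_dvd he).symm.trans (by simp [Nat.ModEq])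
  · intro h
    obtain ⟨c, hc⟩ := he
    obtain ⟨j, hj⟩ : e ∣ n + (Fintype.card F - 1) * i - i := by
      refine (Nat.modEq_iff_dvd' (by nlinarith)).mp (h.symm.trans ?_)
      simp [Nat.ModEq, hc, mul_assoc]
    refine ⟨j % (Fintype.card F - 1), (Nat.mod_lt _ card_pos).trans (by lia), ?_⟩
    calc e * (j % (Fintype.card F - 1)) + i
      _ ≡ e * j + i [MOD Fintype.card F - 1] := ((Nat.mod_modEq _ _).mul_left e).add_right i
      _ = n + (Fintype.card F - 1) * i := by rw [← hj]; exact Nat.sub_add_cancel (by nlinarith)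
      _ ≡ n [MOD Fintype.card F - 1] := by simp [Nat.ModEq]

lemma IsPrimitiveElt.cycClass_two_zero (hα : IsPrimitiveElt α) (h0 : α ≠ 0)
    (hF : ringChar F ≠ 2) : cycClass α 2 0 = positiveSet ⇑(quadraticChar F) := by
  have two_dvd : 2 ∣ Fintype.card F - 1 := by
    have := FiniteField.odd_card_of_char_ne_two hF
    lia
  ext x
  obtain rfl | hx := eq_or_ne x 0
  · simp [zero_notMem_cycClass h0]
  obtain ⟨n, rfl⟩ := hα x hx
  rw [hα.pow_mem_cycClass_iff h0 two_dvd, mem_positiveSet, map_pow, hα.quadraticChar_eq_neg_one hF,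
    neg_one_pow_eq_one_iff_even (by norm_num), Nat.even_iff, Nat.ModEq]

lemma IsPrimitiveElt.cycClass_two_one (hα : IsPrimitiveElt α) (h0 : α ≠ 0)
    (hF : ringChar F ≠ 2) : cycClass α 2 1 = positiveSet (-⇑(quadraticChar F)) := by
  have two_dvd : 2 ∣ Fintype.card F - 1 := by
    have := FiniteField.odd_card_of_char_ne_two hF
    lia
  ext x
  obtain rfl | hx := eq_or_ne x 0
  · simp [zero_notMem_cycClass h0]
  obtain ⟨n, rfl⟩ := hα x hx
  rw [hα.pow_mem_cycClass_iff h0 two_dvd, mem_positiveSet, Pi.neg_apply, map_pow,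
    hα.quadraticChar_eq_neg_one hF, neg_eq_iff_eq_neg, neg_one_pow_eq_neg_one_iff_odd (by norm_num),
    Nat.odd_iff, Nat.ModEq]

end PrimitiveElements

section CharacterSums

variable {F : Type*} [Field F] [Fintype F] {R : Type*} [CommRing R]

lemma sum_mulChar_mul_mulChar_add (χ ψ : MulChar F R) {d : F} (hd : d ≠ 0) :
    ∑ x, χ x * ψ (x + d) = χ (-d) * ψ d * jacobiSum χ ψ := by
  rw [jacobiSum, mul_sum,
    ← Equiv.sum_comp (Equiv.mulLeft₀ (-d) (neg_ne_zero.mpr hd))]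
  refine sum_congr rfl fun x _ => ?_
  rw [Equiv.mulLeft₀_apply, show -d * x + d = d * (1 - x) by ring, map_mul, map_mul]
  ring

lemma sum_mulChar_mul_inv_add [IsDomain R] {χ : MulChar F R} (hχ : χ ≠ 1) {d : F} (hd : d ≠ 0) :
    ∑ x, χ x * χ⁻¹ (x + d) = -1 := by
  rw [sum_mulChar_mul_mulChar_add χ χ⁻¹ hd, jacobiSum_nontrivial_inv hχ, MulChar.inv_apply']
  calc χ (-d) * χ d⁻¹ * -χ (-1)
    _ = -χ (-d * d⁻¹ * -1) := by rw [map_mul, map_mul, mul_neg]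
    _ = -1 := by rw [neg_mul, mul_inv_cancel₀ hd, neg_mul_neg, one_mul, map_one]

lemma mul_dvd_jacobiSum_add_card [IsDomain R] {χ ψ : MulChar F R} (hχ : χ ≠ 1) (hψ : ψ ≠ 1)
    {a b : R} (ha : ∀ x ≠ 0, a ∣ χ x - 1) (hb : ∀ x ≠ 0, b ∣ ψ x - 1) :
    a * b ∣ jacobiSum χ ψ + Fintype.card F := by
  have expand : jacobiSum χ ψ + Fintype.card F = ∑ x, (χ x - 1) * (ψ (1 - x) - 1) := by
    have sum_ψ : ∑ x, ψ (1 - x) = 0 := by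
      rw [← MulChar.sum_eq_zero_of_ne_one hψ]
      exact (Equiv.subLeft 1).sum_comp ψ
    simp only [sub_mul, mul_sub, sum_sub_distrib, mul_one, one_mul, sum_ψ,
      MulChar.sum_eq_zero_of_ne_one hχ, jacobiSum]
    simp
  rw [expand]
  refine dvd_sum fun x _ => ?_
  obtain rfl | h0 := eq_or_ne x 0
  · simp
  obtain rfl | h1 := eq_or_ne x 1
  · simp
  · exact mul_dvd_mul (ha x h0) (hb _ (sub_ne_zero.mpr h1.symm))

variable [DecidableEq F]

lemma sum_comp_sq (hF : ringChar F ≠ 2) (f : F → R) :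
    ∑ x, f (x ^ 2) = ∑ y, (quadraticChar F y + 1 : ℤ) * f y := by
  rw [← sum_fiberwise' univ (· ^ 2)]
  refine sum_congr rfl fun y _ => ?_
  rw [sum_const, nsmul_eq_mul, ← quadraticChar_card_sqrts hF y, Int.cast_natCast]
  congr 3
  ext x
  simp

/- With `u = 1 - 2 x` one has `4 x (1 - x) = 1 - u ^ 2`. -/
lemma apply_four_mul_jacobiSum_self [IsDomain R] (hF : ringChar F ≠ 2) {χ : MulChar F R}
    (hχ : χ ≠ 1) :
    χ 4 * jacobiSum χ χ =
      jacobiSum ((quadraticChar F).ringHomComp (Int.castRingHom R)) χ := by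
  have two_ne_zero : (2 : F) ≠ 0 := Ring.two_ne_zero hF
  have sum_χ : ∑ y, χ (1 - y) = 0 := by
    rw [← MulChar.sum_eq_zero_of_ne_one hχ]
    exact (Equiv.subLeft 1).sum_comp χ
  calc χ 4 * jacobiSum χ χ
    _ = ∑ x, χ (1 - (1 - 2 * x) ^ 2) := by
      rw [jacobiSum, mul_sum]
      refine sum_congr rfl fun x _ => ?_
      rw [← map_mul, ← map_mul]
      ring_nf
    _ = ∑ u, χ (1 - u ^ 2) :=
      ((Equiv.mulLeft₀ 2 two_ne_zero).trans (Equiv.subLeft 1)).sum_comp fun u => χ (1 - u ^ 2)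
    _ = ∑ y, (quadraticChar F y + 1 : ℤ) * χ (1 - y) := sum_comp_sq hF fun y => χ (1 - y)
    _ = _ := by
      simp [add_mul, sum_add_distrib, sum_χ, jacobiSum]

lemma isBalancedSign_quadraticChar (hF : ringChar F ≠ 2) :
    IsBalancedSign ⇑(quadraticChar F) where
  map_zero := quadraticChar_zero
  eq_one_or_eq_neg_one _ hx := quadraticChar_dichotomy hx
  sum_eq_zero := quadraticChar_sum_zero hF

lemma quadraticChar_neg (hF : Fintype.card F % 4 = 1) (x : F) :
    quadraticChar F (-x) = quadraticChar F x := by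
  have h : quadraticChar F (-1) = 1 :=
    (quadraticChar_one_iff_isSquare (neg_ne_zero.mpr one_ne_zero)).mpr
      (FiniteField.isSquare_neg_one_iff.mpr (by lia))
  rw [neg_eq_neg_one_mul, map_mul, h, one_mul]

lemma sum_quadraticChar_mul_add (hF : ringChar F ≠ 2) {d : F} (hd : d ≠ 0) :
    ∑ x, quadraticChar F x * quadraticChar F (x + d) = -1 := by
  have := sum_mulChar_mul_inv_add (quadraticChar_ne_one hF) hd
  rwa [(quadraticChar_isQuadratic F).inv] at this

end CharacterSums

section GaussianIntCharacters

variable {F : Type*} [Field F]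

lemma norm_mulChar_apply (χ : MulChar F GaussianInt) {x : F} (hx : x ≠ 0) :
    (χ x).norm = 1 :=
  (Zsqrtd.norm_eq_one_iff' (by norm_num) _).mpr ((isUnit_iff_ne_zero.mpr hx).map χ)

lemma mulChar_inv_apply_eq_star [Finite F] (χ : MulChar F GaussianInt) (x : F) :
    χ⁻¹ x = star (χ x) := by
  apply GaussianInt.toComplex_injective
  have := MulChar.star_apply' (χ.ringHomComp GaussianInt.toComplex) x
  rw [MulChar.ringHomComp_inv] at this
  simpa [GaussianInt.toComplex_star] using this.symm

variable [Fintype F]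

lemma jacobiSum_inv_inv (χ ψ : MulChar F GaussianInt) :
    jacobiSum χ⁻¹ ψ⁻¹ = star (jacobiSum χ ψ) := by
  simp only [jacobiSum, star_sum, star_mul', mulChar_inv_apply_eq_star]

lemma norm_jacobiSum {χ ψ : MulChar F GaussianInt} (hχ : χ ≠ 1) (hψ : ψ ≠ 1) (hχψ : χ * ψ ≠ 1) :
    (jacobiSum χ ψ).norm = Fintype.card F := by
  have ringChar_ne : ringChar ℂ ≠ ringChar F := by
    rw [ringChar.eq_zero]
    exact (CharP.ringChar_ne_zero_of_finite F).symm
  have hinj := GaussianInt.toComplex_injective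
  have mul_star : jacobiSum χ ψ * star (jacobiSum χ ψ) = Fintype.card F := by
    apply hinj
    have := jacobiSum_mul_jacobiSum_inv ringChar_ne ((MulChar.ringHomComp_ne_one_iff hinj).mpr hχ)
      ((MulChar.ringHomComp_ne_one_iff hinj).mpr hψ)
      (by rwa [← MulChar.ringHomComp_mul, MulChar.ringHomComp_ne_one_iff hinj])
    rwa [MulChar.ringHomComp_inv, MulChar.ringHomComp_inv, jacobiSum_ringHomComp,
      jacobiSum_ringHomComp, ← map_mul, jacobiSum_inv_inv, ← map_natCast GaussianInt.toComplex]
      at this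
  exact_mod_cast (Zsqrtd.norm_eq_mul_conj _).trans mul_star

/-- The sum of the coordinates of a Gaussian integer. On the units it is the sign function with
value `1` at `1, i` and `-1` at `-1, -i`, so that it turns a quartic character into the `±1`-valued
function describing the union of two consecutive quartic classes. -/
def coordSum (z : GaussianInt) : ℤ := z.re + z.im

lemma coordSum_eq_one_or_eq_neg_one {z : GaussianInt} (hz : z.norm = 1) :
    coordSum z = 1 ∨ coordSum z = -1 := by
  rw [Zsqrtd.norm_def] at hz
  have re_mul_im : z.re * z.im = 0 := by
    by_contra h
    obtain ⟨hre, him⟩ := mul_ne_zero_iff.mp h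
    have := Int.one_le_abs hre
    have := Int.one_le_abs him
    nlinarith [abs_mul_abs_self z.re, abs_mul_abs_self z.im]
  rw [← sq_eq_one_iff, coordSum]
  linear_combination hz + 2 * re_mul_im

lemma coordSum_mul_coordSum (z w : GaussianInt) :
    coordSum z * coordSum w = (z * star w).re + (z * w).im := by
  simp only [coordSum, Zsqrtd.re_mul, Zsqrtd.im_mul, Zsqrtd.re_star, Zsqrtd.im_star]
  ring

lemma re_sum {ι : Type*} (s : Finset ι) (f : ι → GaussianInt) :
    (∑ x ∈ s, f x).re = ∑ x ∈ s, (f x).re :=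
  map_sum (⟨⟨Zsqrtd.re, rfl⟩, fun _ _ => rfl⟩ : GaussianInt →+ ℤ) f s

lemma im_sum {ι : Type*} (s : Finset ι) (f : ι → GaussianInt) :
    (∑ x ∈ s, f x).im = ∑ x ∈ s, (f x).im :=
  map_sum (⟨⟨Zsqrtd.im, rfl⟩, fun _ _ => rfl⟩ : GaussianInt →+ ℤ) f s

lemma isBalancedSign_coordSum {χ : MulChar F GaussianInt} (hχ : χ ≠ 1) :
    IsBalancedSign fun x => coordSum (χ x) where
  map_zero := by simp [coordSum, MulChar.map_zero]
  eq_one_or_eq_neg_one _ hx := coordSum_eq_one_or_eq_neg_one (norm_mulChar_apply χ hx)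
  sum_eq_zero := by
    simp only [coordSum, sum_add_distrib, ← re_sum, ← im_sum, MulChar.sum_eq_zero_of_ne_one hχ]
    simp

lemma sum_coordSum_mul_coordSum_add {χ : MulChar F GaussianInt} (hχ : χ ≠ 1) {d : F}
    (hd : d ≠ 0) :
    ∑ x, coordSum (χ x) * coordSum (χ (x + d)) =
      (χ (-d) * χ d * jacobiSum χ χ).im - 1 := by
  simp only [coordSum_mul_coordSum, ← mulChar_inv_apply_eq_star, sum_add_distrib, ← re_sum,
    ← im_sum, sum_mulChar_mul_inv_add hχ hd, sum_mulChar_mul_mulChar_add χ χ hd]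
  rw [Zsqrtd.re_neg, Zsqrtd.re_one, neg_add_eq_sub]

section QuarticCharacter

variable {χ : MulChar F GaussianInt}

lemma apply_neg_one_eq_neg_one {α : F} (hα : IsPrimitiveElt α) (h0 : α ≠ 0)
    (hF : Fintype.card F % 8 = 5) (hχ : χ α = Zsqrtd.sqrtd) : χ (-1) = -1 := by
  obtain ⟨r, hr⟩ : ∃ r, Fintype.card F = 2 * (2 * (2 * r + 1)) + 1 := ⟨Fintype.card F / 8, by lia⟩
  rw [← hα.pow_eq_neg_one h0 hr, map_pow, hχ, pow_mul, sq, Zsqrtd.dmuld, Int.cast_neg,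
    Int.cast_one, (odd_two_mul_add_one r).neg_one_pow]

variable [DecidableEq F]

lemma sq_eq_quadraticChar {α : F} (hα : IsPrimitiveElt α) (hF : ringChar F ≠ 2)
    (hχ : χ α = Zsqrtd.sqrtd) :
    χ ^ 2 = (quadraticChar F).ringHomComp (Int.castRingHom GaussianInt) := by
  refine MulChar.ext fun x => ?_
  obtain ⟨n, hn⟩ := hα x x.ne_zero
  simp only [← hn, map_pow, MulChar.pow_apply' _ two_ne_zero, hχ, MulChar.ringHomComp_apply,
    hα.quadraticChar_eq_neg_one hF, eq_intCast]
  rw [← pow_mul, mul_comm, pow_mul, sq, Zsqrtd.dmuld]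

lemma cycClass_four_zero_union_one {α : F} (hα : IsPrimitiveElt α) (h0 : α ≠ 0)
    (hF : Fintype.card F % 4 = 1) (hχ : χ α = Zsqrtd.sqrtd) :
    cycClass α 4 0 ∪ cycClass α 4 1 = positiveSet fun x => coordSum (χ x) := by
  ext x
  obtain rfl | hx := eq_or_ne x 0
  · simp [zero_notMem_cycClass h0, coordSum, MulChar.map_zero]
  obtain ⟨n, rfl⟩ := hα x hx
  have four_dvd : 4 ∣ Fintype.card F - 1 := by lia
  have sqrtd_sq : (Zsqrtd.sqrtd : GaussianInt) ^ 2 = -1 := by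
    rw [sq, Zsqrtd.dmuld, Int.cast_neg, Int.cast_one]
  have sqrtd_pow : (Zsqrtd.sqrtd : GaussianInt) ^ n = Zsqrtd.sqrtd ^ (n % 4) := by
    conv_lhs => rw [← Nat.div_add_mod n 4, pow_add, pow_mul, pow_mul _ 2 2, sqrtd_sq]
    simp
  have := Nat.mod_lt n (show 0 < 4 by norm_num)
  rw [mem_union, hα.pow_mem_cycClass_iff h0 four_dvd, hα.pow_mem_cycClass_iff h0 four_dvd,
    mem_positiveSet, map_pow, hχ, sqrtd_pow, Nat.ModEq, Nat.ModEq]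
  interval_cases n % 4 <;> simp [coordSum, pow_succ]

variable (hF : ringChar F ≠ 2)
  (hχ : χ ^ 2 = (quadraticChar F).ringHomComp (Int.castRingHom GaussianInt))
include hχ

lemma apply_sq_eq_quadraticChar (x : F) : χ x ^ 2 = (quadraticChar F x : GaussianInt) := by
  rw [← MulChar.pow_apply' χ two_ne_zero, hχ]
  rfl

lemma apply_four_eq_neg_one (hF8 : Fintype.card F % 8 = 5) : χ 4 = -1 := by
  have two_nonsquare : quadraticChar F 2 = -1 := by
    rw [quadraticChar_neg_one_iff_not_isSquare, FiniteField.isSquare_two_iff]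
    lia
  rw [show (4 : F) = 2 ^ 2 by norm_num, map_pow, apply_sq_eq_quadraticChar hχ, two_nonsquare]
  simp

include hF

lemma sq_ne_one_of_sq_eq_quadraticChar : χ ^ 2 ≠ 1 := by
  rw [hχ]
  exact (MulChar.ringHomComp_ne_one_iff Int.cast_injective).mpr (quadraticChar_ne_one hF)

lemma ne_one_of_sq_eq_quadraticChar : χ ≠ 1 := by
  rintro rfl
  exact sq_ne_one_of_sq_eq_quadraticChar hF hχ (one_pow 2)

lemma norm_jacobiSum_self : (jacobiSum χ χ).norm = Fintype.card F :=
  have hχ1 := ne_one_of_sq_eq_quadraticChar hF hχ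
  norm_jacobiSum hχ1 hχ1 (sq χ ▸ sq_ne_one_of_sq_eq_quadraticChar hF hχ)

/- Since `χ x - 1` is divisible by `1 + i` and `ρ x - 1` by `2`, the product `2 (1 + i)` divides
`J(ρ, χ) + q`; the Jacobi sum `J(ρ, χ)` is `-J(χ, χ)`. -/
lemma exists_jacobiSum_self_eq (hF8 : Fintype.card F % 8 = 5) :
    ∃ c : GaussianInt,
      jacobiSum χ χ = (Fintype.card F : GaussianInt) - 2 * (1 + Zsqrtd.sqrtd) * c := by
  have hχ1 := ne_one_of_sq_eq_quadraticChar hF hχ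
  have two_dvd (x : F) (hx : x ≠ 0) :
      2 ∣ (quadraticChar F).ringHomComp (Int.castRingHom GaussianInt) x - 1 := by
    rcases quadraticChar_dichotomy hx with h | h
    exacts [⟨0, by simp [h]⟩, ⟨-1, by norm_num [h]⟩]
  have one_add_i_dvd (x : F) (hx : x ≠ 0) : (1 + Zsqrtd.sqrtd) ∣ χ x - 1 := by
    obtain ⟨m, hm⟩ : ∃ m, coordSum (χ x) - 1 = 2 * m := by
      rcases coordSum_eq_one_or_eq_neg_one (norm_mulChar_apply χ hx) with h | h <;> rw [h]
      exacts [⟨0, rfl⟩, ⟨-1, rfl⟩]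
    rw [coordSum] at hm
    refine ⟨⟨m, (χ x).im - m⟩, ?_⟩
    ext
    · simp
      lia
    · simp
  have hρ := (MulChar.ringHomComp_ne_one_iff (f := Int.castRingHom GaussianInt)
    Int.cast_injective).mpr (quadraticChar_ne_one hF)
  obtain ⟨c, hc⟩ := mul_dvd_jacobiSum_add_card hρ hχ1 two_dvd one_add_i_dvd
  rw [← apply_four_mul_jacobiSum_self hF hχ1, apply_four_eq_neg_one hχ hF8] at hc
  exact ⟨c, by linear_combination -hc⟩

lemma re_jacobiSum_self_emod_four (hF8 : Fintype.card F % 8 = 5) :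
    (jacobiSum χ χ).re % 4 = 3 := by
  obtain ⟨⟨u, v⟩, hJ⟩ := exists_jacobiSum_self_eq hF hχ hF8
  have mul_eq : (2 * (1 + Zsqrtd.sqrtd) * ⟨u, v⟩ : GaussianInt) = ⟨2 * (u - v), 2 * (u + v)⟩ := by
    ext <;> simp <;> ring
  rw [mul_eq] at hJ
  have hre : (jacobiSum χ χ).re = Fintype.card F - 2 * (u - v) := by
    rw [hJ, Zsqrtd.re_sub, Zsqrtd.re_natCast]
  have him : (jacobiSum χ χ).im = -(2 * (u + v)) := by
    rw [hJ, Zsqrtd.im_sub, Zsqrtd.im_natCast, zero_sub]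
  have hnorm := norm_jacobiSum_self hF hχ
  obtain ⟨r, hr⟩ : ∃ r : ℤ, (Fintype.card F : ℤ) = 8 * r + 5 := ⟨Fintype.card F / 8, by lia⟩
  rw [Zsqrtd.norm_def, hre, him, hr] at hnorm
  have norm_div_four : (8 * r + 5) * (u - v) = (8 * r + 5) * (2 * r + 1) + 2 * (u ^ 2 + v ^ 2) := by
    linarith
  have odd_mul_sub : Odd ((8 * r + 5) * (u - v)) := norm_div_four ▸
    ((show Odd (8 * r + 5) from ⟨4 * r + 2, by ring⟩).mul (odd_two_mul_add_one r)).add_even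
      (even_two_mul _)
  obtain ⟨n, hn⟩ := (Int.odd_mul.mp odd_mul_sub).2
  lia

lemma four_mul_count_intDiff_coordSum (hχ_neg : χ (-1) = -1) {d : F} (hd : d ≠ 0) :
    4 * ((intDiff (positiveSet fun x => coordSum (χ x))).count d : ℤ) =
      Fintype.card F - 3 - (jacobiSum χ χ).im * quadraticChar F d := by
  have hχ1 := ne_one_of_sq_eq_quadraticChar hF hχ
  have neg_d : χ (-d) = -χ d := by rw [neg_eq_neg_one_mul d, map_mul, hχ_neg, neg_one_mul]
  have odd_coordSum : coordSum (χ (-d)) = -coordSum (χ d) := by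
    simp only [neg_d, coordSum, Zsqrtd.re_neg, Zsqrtd.im_neg]
    ring
  rw [(isBalancedSign_coordSum hχ1).four_mul_count_intDiff hd, odd_coordSum,
    sum_coordSum_mul_coordSum_add hχ1 hd, neg_d, neg_mul, ← sq, apply_sq_eq_quadraticChar hχ]
  simp only [neg_mul, Zsqrtd.im_neg, Zsqrtd.im_mul, Zsqrtd.re_intCast, Zsqrtd.im_intCast]
  ring

end QuarticCharacter

end GaussianIntCharacters

section Reduction

lemma not_dvd_choose_mul_geom_sum {p : ℕ} (hp : p.Prime) {a b : ℕ} (hab : a ≤ b) (hb : b < p)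
    (m : ℕ) : ¬ p ∣ (b * ∑ i ∈ range m, p ^ i).choose (a * ∑ i ∈ range m, p ^ i) := by
  have := Fact.mk hp
  induction m with
  | zero => simpa using hp.one_lt.ne'
  | succ m ih =>
    have digit {c : ℕ} (hc : c < p) (N : ℕ) :
        c * (p * N + 1) % p = c ∧ c * (p * N + 1) / p = c * N := by
      rw [show c * (p * N + 1) = c + p * (c * N) by ring, Nat.add_mul_mod_self_left,
        Nat.add_mul_div_left _ _ hp.pos, Nat.mod_eq_of_lt hc, Nat.div_eq_of_lt hc, zero_add]
      exact ⟨rfl, rfl⟩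
    rw [geom_sum_succ, Choose.choose_modEq_choose_mod_mul_choose_div_nat.dvd_iff dvd_rfl,
      (digit hb _).1, (digit hb _).2, (digit (hab.trans_lt hb) _).1, (digit (hab.trans_lt hb) _).2,
      hp.dvd_mul]
    rintro (h | h)
    · exact hp.coprime_iff_not_dvd.mp (hp.coprime_choose_of_lt hb hab) h
    · exact ih h

lemma map_eq_re_add_im_mul {R : Type*} [CommRing R] (φ : GaussianInt →+* R) (z : GaussianInt) :
    φ z = z.re + z.im * φ Zsqrtd.sqrtd := by
  obtain ⟨x, y⟩ := z
  conv_lhs => rw [Zsqrtd.decompose]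
  rw [map_add, map_mul, map_intCast, map_intCast, mul_comm]

section PowerSums

variable {F : Type*} [Field F] [Fintype F]

lemma sum_pow_eq {n : ℕ} (hn : n ≠ 0) :
    ∑ x : F, x ^ n = if Fintype.card F - 1 ∣ n then -1 else 0 := by
  classical
  rw [Fintype.sum_eq_add_sum_subtype_ne _ 0, zero_pow hn, zero_add,
    ← FiniteField.sum_pow_units, ← Equiv.sum_comp unitsEquivNeZero]
  rfl

lemma sum_pow_mul_one_sub_pow {a b j : ℕ} (ha : a ≠ 0) (haj : a + j = Fintype.card F - 1)
    (hab : a + b < 2 * (Fintype.card F - 1)) :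
    ∑ x : F, x ^ a * (1 - x) ^ b = -((-1) ^ j * b.choose j) := by
  have only_j (i : ℕ) (hi : i ∈ range (b + 1)) : Fintype.card F - 1 ∣ a + i ↔ i = j := by
    rw [mem_range] at hi
    constructor
    · rintro ⟨c, hc⟩
      have : c < 2 := by nlinarith
      interval_cases c <;> lia
    · rintro rfl
      exact haj ▸ dvd_rfl
  calc ∑ x : F, x ^ a * (1 - x) ^ b
    _ = ∑ x : F, ∑ i ∈ range (b + 1), (-1 : F) ^ i * b.choose i * x ^ (a + i) := by
      refine sum_congr rfl fun x _ => ?_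
      rw [sub_eq_neg_add, add_pow, mul_sum]
      refine sum_congr rfl fun i _ => ?_
      rw [neg_pow]
      ring
    _ = ∑ i ∈ range (b + 1), (-1 : F) ^ i * b.choose i * if i = j then -1 else 0 := by
      rw [sum_comm]
      refine sum_congr rfl fun i hi => ?_
      rw [← mul_sum, sum_pow_eq (by lia)]
      simp only [only_j i hi]
    _ = -((-1) ^ j * b.choose j) := by
      simp only [mul_ite, mul_neg, mul_one, mul_zero, sum_ite_eq', mem_range]
      split_ifs with hj
      · rfl
      · rw [Nat.choose_eq_zero_of_lt (by lia)]
        simp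

end PowerSums

section QuarticCharacter

variable {F : Type*} [Field F] {α : F} (hα : IsPrimitiveElt α) {k : ℕ} (hk : k ≠ 0)
  {χ : MulChar F GaussianInt} (hχ : χ α = Zsqrtd.sqrtd)
  {φ : GaussianInt →+* F} (hφ : φ Zsqrtd.sqrtd = α ^ k)
include hα hk hχ hφ

lemma map_mulChar_apply (x : F) : φ (χ x) = x ^ k := by
  obtain rfl | hx := eq_or_ne x 0
  · rw [MulChar.map_zero, map_zero, zero_pow hk]
  · obtain ⟨n, rfl⟩ := hα x hx
    rw [map_pow, hχ, map_pow, hφ, pow_right_comm]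

variable [Fintype F] (hF : Fintype.card F = 4 * k + 1)
include hF

lemma map_mulChar_inv_apply (x : F) : φ (χ⁻¹ x) = x ^ (3 * k) := by
  obtain rfl | hx := eq_or_ne x 0
  · rw [MulChar.map_zero, map_zero, zero_pow (by lia)]
  · rw [MulChar.inv_apply', map_mulChar_apply hα hk hχ hφ, inv_pow]
    refine inv_eq_of_mul_eq_one_right ?_
    rw [← pow_add, ← FiniteField.pow_card_sub_one_eq_one x hx]
    congr 1
    lia

lemma map_jacobiSum_self : φ (jacobiSum χ χ) = 0 := by
  simp only [jacobiSum, map_sum, map_mul, map_mulChar_apply hα hk hχ hφ]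
  rw [sum_pow_mul_one_sub_pow (j := 3 * k) hk (by lia) (by lia),
    Nat.choose_eq_zero_of_lt (by lia)]
  simp

lemma map_star_jacobiSum_self :
    φ (star (jacobiSum χ χ)) = -((-1) ^ k * (3 * k).choose k) := by
  rw [← jacobiSum_inv_inv]
  simp only [jacobiSum, map_sum, map_mul, map_mulChar_inv_apply hα hk hχ hφ hF]
  exact sum_pow_mul_one_sub_pow (by lia) (by lia) (by lia)

lemma not_dvd_re_jacobiSum_self {p m : ℕ} (hp : p.Prime) (hp4 : p % 4 = 1)
    (hFp : Fintype.card F = p ^ m) [CharP F p] : ¬ (p : ℤ) ∣ (jacobiSum χ χ).re := by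
  obtain ⟨r, rfl⟩ : ∃ r, p = 4 * r + 1 := ⟨p / 4, by lia⟩
  have k_eq : k = r * ∑ i ∈ range m, (4 * r + 1) ^ i := by
    have := geom_sum_mul_add (4 * r) m
    lia
  have not_dvd_choose : ¬ (4 * r + 1) ∣ (3 * k).choose k := by
    have := not_dvd_choose_mul_geom_sum hp (show r ≤ 3 * r by lia) (by lia) m
    rwa [mul_assoc, ← k_eq] at this
  have trace : jacobiSum χ χ + star (jacobiSum χ χ) = (2 * (jacobiSum χ χ).re : ℤ) := by
    ext <;> simp [two_mul]
  intro h
  have trace_eq_zero : φ (jacobiSum χ χ + star (jacobiSum χ χ)) = 0 := by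
    rw [trace, map_intCast, CharP.intCast_eq_zero_iff F (4 * r + 1)]
    exact h.mul_left 2
  rw [map_add, map_jacobiSum_self hα hk hχ hφ hF, map_star_jacobiSum_self hα hk hχ hφ hF, zero_add,
    neg_eq_zero, mul_eq_zero, CharP.cast_eq_zero_iff F (4 * r + 1)] at trace_eq_zero
  exact trace_eq_zero.elim (pow_ne_zero k (neg_ne_zero.mpr one_ne_zero)) not_dvd_choose

lemma dvd_re_mul_add_im_mul {p : ℕ} [CharP F p] {s t : ℤ} (hst : (t : F) * α ^ k = s) :
    (p : ℤ) ∣ (jacobiSum χ χ).re * t + (jacobiSum χ χ).im * s := by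
  rw [← CharP.intCast_eq_zero_iff F p]
  have := map_jacobiSum_self hα hk hχ hφ hF
  rw [map_eq_re_add_im_mul, hφ] at this
  push_cast
  linear_combination t * this - (jacobiSum χ χ).im * hst

end QuarticCharacter

end Reduction

section SumsOfTwoSquares

lemma mod_eight_eq_five_of_pow {p m : ℕ} (h : p ^ m % 8 = 5) : p % 8 = 5 := by
  have cast_eq_five (n : ℕ) : n % 8 = 5 ↔ (n : ZMod 8) = 5 := by
    simpa using (ZMod.natCast_eq_natCast_iff' n 5 8).symm
  rw [cast_eq_five, Nat.cast_pow] at h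
  rw [cast_eq_five]
  obtain ⟨j, rfl | rfl⟩ := m.even_or_odd'
  · have sq_ne_five : ∀ x : ZMod 8, x ^ 2 ≠ 5 := by decide
    rw [pow_mul'] at h
    exact absurd h (sq_ne_five _)
  · have eq_five_of_sq_mul : ∀ x y : ZMod 8, x ^ 2 * y = 5 → y = 5 := by decide
    rw [pow_succ, pow_mul'] at h
    exact eq_five_of_sq_mul _ _ h

lemma not_dvd_of_sq_add_sq_eq_pow {p : ℤ} (hp : Prime p) {m : ℕ} (hm : m ≠ 0) {s t : ℤ}
    (h : s ^ 2 + t ^ 2 = p ^ m) (hs : ¬ p ∣ s) : ¬ p ∣ t := fun ht =>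
  hs <| hp.dvd_of_dvd_pow <| (dvd_add_left (dvd_pow ht two_ne_zero)).mp (h ▸ dvd_pow_self p hm)

lemma mul_add_mul_eq_zero_or_mul_sub_mul_eq_zero {p : ℤ} (hp : Prime p) (hp2 : ¬ p ∣ 2)
    {m : ℕ} {a b s t : ℤ} (hab : a ^ 2 + b ^ 2 = p ^ m) (hst : s ^ 2 + t ^ 2 = p ^ m)
    (ha : ¬ p ∣ a) (ht : ¬ p ∣ t) (h : p ∣ a * t + b * s) :
    a * t + b * s = 0 ∨ a * s - b * t = 0 := by
  have not_dvd_conj : ¬ p ∣ a * t - b * s := by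
    intro h'
    have := dvd_add h h'
    rw [show a * t + b * s + (a * t - b * s) = 2 * (a * t) by ring, hp.dvd_mul, hp.dvd_mul] at this
    tauto
  have pow_dvd : p ^ m ∣ a * t + b * s :=
    ((hp.coprime_iff_not_dvd.mpr not_dvd_conj).pow_left).dvd_of_dvd_mul_right
      ⟨a ^ 2 - s ^ 2, by linear_combination a ^ 2 * hst - s ^ 2 * hab⟩
  by_contra! hne
  have sq_add_sq : (a * t + b * s) ^ 2 + (a * s - b * t) ^ 2 = (p ^ m) ^ 2 := by
    linear_combination (s ^ 2 + t ^ 2) * hab + p ^ m * hst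
  have := Int.le_of_dvd (sq_pos_of_ne_zero hne.1) (pow_dvd_pow_of_dvd pow_dvd 2)
  have := sq_pos_of_ne_zero hne.2
  lia

/- Up to the order and signs of the coordinates the representation is unique; the congruences
pin down both. -/
lemma eq_of_sq_add_sq_eq_pow {p : ℤ} (hp : Prime p) (hp2 : Odd p) {m : ℕ} (hm : m ≠ 0)
    {a b s t : ℤ} (hab : a ^ 2 + b ^ 2 = p ^ m) (hst : s ^ 2 + t ^ 2 = p ^ m)
    (ha : ¬ p ∣ a) (hs : ¬ p ∣ s) (h : p ∣ a * t + b * s) (ha4 : a % 4 = 3) (hs4 : s % 4 = 1) :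
    b = t := by
  have not_dvd_two : ¬ p ∣ 2 := fun hdvd => by
    obtain ⟨r, hr⟩ := hp2
    exact hp.not_dvd_one ⟨1 - r * (2 / p), by linear_combination r * Int.mul_ediv_cancel' hdvd - hr⟩
  have odd_a : Odd a := Int.odd_iff.mpr (by lia)
  have odd_s : Odd s := Int.odd_iff.mpr (by lia)
  have even_t : Even t := by
    have := hst ▸ hp2.pow (n := m)
    simpa [Int.odd_add, Int.odd_pow, Int.even_pow, odd_s] using this
  have diff_ne_zero : a * s - b * t ≠ 0 := fun h0 => by
    have := (odd_a.mul odd_s).sub_even (even_t.mul_left b)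
    simp [h0] at this
  have cross_eq_zero : a * t + b * s = 0 :=
    (mul_add_mul_eq_zero_or_mul_sub_mul_eq_zero hp not_dvd_two hab hst ha
      (not_dvd_of_sq_add_sq_eq_pow hp hm hst hs) h).resolve_right diff_ne_zero
  have sq_eq_sq : a ^ 2 = s ^ 2 := mul_left_cancel₀ (pow_ne_zero m hp.ne_zero) <| by
    linear_combination s ^ 2 * hab - a ^ 2 * hst + (a * t - b * s) * cross_eq_zero
  obtain rfl : a = -s := (sq_eq_sq_iff_eq_or_eq_neg.mp sq_eq_sq).resolve_left (by lia)
  exact mul_left_cancel₀ (show s ≠ 0 by lia) (by linear_combination cross_eq_zero)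

end SumsOfTwoSquares

section QuarticClasses

variable {F : Type*} [Field F] [Fintype F] {α : F}

lemma IsPrimitiveElt.exists_mulChar_apply_eq_sqrtd (hα : IsPrimitiveElt α) (h0 : α ≠ 0)
    (hF4 : Fintype.card F % 4 = 1) : ∃ χ : MulChar F GaussianInt, χ α = Zsqrtd.sqrtd :=
  hα.exists_mulChar_apply_eq h0 (n := 4) rfl (by lia)

lemma im_jacobiSum_self_eq (hα : IsPrimitiveElt α) {χ : MulChar F GaussianInt}
    (hχ : χ α = Zsqrtd.sqrtd) {p m : ℕ} (hp : p.Prime) (hF : Fintype.card F = p ^ m)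
    (hF8 : Fintype.card F % 8 = 5) {s t : ℤ} (hst : (p : ℤ) ^ m = s ^ 2 + t ^ 2)
    (hps : ¬ (p : ℤ) ∣ s) (hs4 : s % 4 = 1)
    (ht : (t : F) * α ^ ((Fintype.card F - 1) / 4) = s) :
    (jacobiSum χ χ).im = t := by
  classical
  have := Fact.mk hp
  have : CharP F p := charP_of_card_eq_prime_pow hF
  have p_mod_eight : p % 8 = 5 := mod_eight_eq_five_of_pow (hF ▸ hF8)
  have hm : m ≠ 0 := by
    rintro rfl
    rw [hF, pow_zero] at hF8
    lia
  have h0 := hα.ne_zero (by lia)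
  have hF2 : ringChar F ≠ 2 := FiniteField.even_card_iff_char_two.not.mpr (by lia)
  have hχ2 := sq_eq_quadraticChar hα hF2 hχ
  set k := (Fintype.card F - 1) / 4
  have hFk : Fintype.card F = 4 * k + 1 := by lia
  have hk0 : k ≠ 0 := by lia
  have sq_pow_k : α ^ k * α ^ k = ((-1 : ℤ) : F) := by
    rw [← pow_add, hα.pow_eq_neg_one h0 (by lia)]
    simp
  let φ : GaussianInt →+* F := Zsqrtd.lift ⟨α ^ k, sq_pow_k⟩
  have hφ : φ Zsqrtd.sqrtd = α ^ k := by simp [φ]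
  have norm_eq : (jacobiSum χ χ).re ^ 2 + (jacobiSum χ χ).im ^ 2 = (p : ℤ) ^ m := by
    have := norm_jacobiSum_self hF2 hχ2
    rw [Zsqrtd.norm_def, hF] at this
    push_cast at this
    linear_combination this
  exact eq_of_sq_add_sq_eq_pow (Nat.prime_iff_prime_int.mp hp)
    (Int.odd_iff.mpr (by lia)) hm norm_eq hst.symm
    (not_dvd_re_jacobiSum_self hα hk0 hχ hφ hFk hp (by lia) hF) hps
    (dvd_re_mul_add_im_mul hα hk0 hχ hφ hFk ht)
    (re_jacobiSum_self_emod_four hF2 hχ2 hF8) hs4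

variable [DecidableEq F]

lemma two_mul_card_cycClass_four_zero_union_one (hα : IsPrimitiveElt α)
    (hF4 : Fintype.card F % 4 = 1) :
    2 * (#(cycClass α 4 0 ∪ cycClass α 4 1) : ℤ) = Fintype.card F - 1 := by
  have h0 := hα.ne_zero (by have := Fintype.one_lt_card (α := F); lia)
  obtain ⟨χ, hχ⟩ := hα.exists_mulChar_apply_eq_sqrtd h0 hF4
  have hF2 : ringChar F ≠ 2 := FiniteField.even_card_iff_char_two.not.mpr (by lia)
  rw [cycClass_four_zero_union_one hα h0 hF4 hχ]
  exact (isBalancedSign_coordSum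
    (ne_one_of_sq_eq_quadraticChar hF2 (sq_eq_quadraticChar hα hF2 hχ))).two_mul_card_positiveSet

lemma four_mul_count_intDiff_cycClass_four_zero_union_one (hα : IsPrimitiveElt α) {p m : ℕ}
    (hp : p.Prime) (hF : Fintype.card F = p ^ m) (hF8 : Fintype.card F % 8 = 5) {s t : ℤ}
    (hst : (p : ℤ) ^ m = s ^ 2 + t ^ 2) (hps : ¬ (p : ℤ) ∣ s) (hs4 : s % 4 = 1)
    (ht : (t : F) * α ^ ((Fintype.card F - 1) / 4) = s) {d : F} (hd : d ≠ 0) :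
    4 * ((intDiff (cycClass α 4 0 ∪ cycClass α 4 1)).count d : ℤ) =
      Fintype.card F - 3 - t * quadraticChar F d := by
  have h0 := hα.ne_zero (by lia)
  obtain ⟨χ, hχ⟩ := hα.exists_mulChar_apply_eq_sqrtd h0 (by lia)
  have hF2 : ringChar F ≠ 2 := FiniteField.even_card_iff_char_two.not.mpr (by lia)
  rw [cycClass_four_zero_union_one hα h0 (by lia) hχ,
    four_mul_count_intDiff_coordSum hF2 (sq_eq_quadraticChar hα hF2 hχ)
      (apply_neg_one_eq_neg_one hα h0 hF8 hχ) hd,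
    im_jacobiSum_self_eq hα hχ hp hF hF8 hst hps hs4 ht]

end QuarticClasses

/-- For a prime power `q = p^m ≡ 5 (mod 8)` with the Katre–Rajwade
normalized representation `q = s² + t²`, the set `E = C_0^4 ∪ C_1^4` satisfies
`Δ(E) = ((q-3+t)/4) • C_1^2 + ((q-3-t)/4) • C_0^2`; in particular `E` is a skew PDS
corresponding to the Paley PDS `C_1^2` if `t = -2`, and to `C_0^2` if `t = 2`. -/
theorem stmt_2 {F : Type*} [Field F] [Fintype F] [DecidableEq F]
    (q p m : ℕ) (hp : p.Prime) (hq : Fintype.card F = q) (hqpm : q = p ^ m)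
    (hq8 : q % 8 = 5)
    (α : F) (hα : IsPrimitiveElt α)
    (s t : ℤ) (hst : (q : ℤ) = s ^ 2 + t ^ 2)
    (hps : ¬((p : ℤ) ∣ s)) (hs4 : s % 4 = 1)
    (ht : (t : F) * α ^ ((q - 1) / 4) = (s : F)) :
    (∃ a b : ℕ, 4 * (a : ℤ) = (q : ℤ) - 3 + t ∧ 4 * (b : ℤ) = (q : ℤ) - 3 - t ∧
      intDiff (cycClass α 4 0 ∪ cycClass α 4 1) =
        a • (cycClass α 2 1).val + b • (cycClass α 2 0).val) ∧
    (t = -2 → IsSkewPDS (cycClass α 4 0 ∪ cycClass α 4 1) (cycClass α 2 1)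
        q ((q - 1) / 2) ((q - 5) / 4) ((q - 1) / 4)) ∧
    (t = 2 → IsSkewPDS (cycClass α 4 0 ∪ cycClass α 4 1) (cycClass α 2 0)
        q ((q - 1) / 2) ((q - 5) / 4) ((q - 1) / 4)) := by
  subst hq
  have h0 := hα.ne_zero (by lia)
  have hF2 : ringChar F ≠ 2 := FiniteField.even_card_iff_char_two.not.mpr (by lia)
  have hρ := isBalancedSign_quadraticChar hF2
  have even_ρ := quadraticChar_neg (F := F) (by lia)
  have autocorrelation_ρ (d : F) (hd : d ≠ 0) := sum_quadraticChar_mul_add hF2 hd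
  have card_E := two_mul_card_cycClass_four_zero_union_one hα (by lia)
  have count_E (d : F) (hd : d ≠ 0) := four_mul_count_intDiff_cycClass_four_zero_union_one hα hp
    hqpm hq8 (by simp [← hst, hqpm]) hps hs4 ht hd
  have count_E_α := count_E α h0
  have count_E_one := count_E 1 one_ne_zero
  rw [hα.quadraticChar_eq_neg_one hF2, mul_neg_one, sub_neg_eq_add] at count_E_α
  rw [map_one, mul_one] at count_E_one
  rw [hα.cycClass_two_zero h0 hF2, hα.cycClass_two_one h0 hF2]
  refine ⟨⟨_, _, count_E_α, count_E_one, ?_⟩, ?_, ?_⟩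
  · rw [add_comm]
    exact hρ.intDiff_eq count_E count_E_one count_E_α
  · rintro rfl
    exact hρ.neg.isSkewPDS (by simpa using even_ρ) (by simpa using autocorrelation_ρ) (by lia)
      card_E (by simpa using count_E) (by lia)
  · rintro rfl
    exact hρ.isSkewPDS even_ρ autocorrelation_ρ (by lia) card_E count_E (by lia)
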